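/- Let V be an n-element set partitioned into four sets V₁, V₂, V₃, V₄, and let G be a graph on the vertex set V such that each V_i (i = 1,2,3,4) induces a clique in G. Then G is isomorphic to the intersection graph of a family of n convex sets in the plane. -/

import Mathlib

/-!
Inside a large triangle place four touching triangles, one per clique: three thin ones along its
sides, meeting at its corners, and a fourth in the middle touching each of them. At each of the six
contact points a line strictly separates the remaining contact points of the two triangles.

Bend each contact point into a tiny strictly convex arc. A vertex of the later of two cliques
touches the arc between them at a private point, and the tangent there separates that point from the
rest of the arc; a vertex of the earlier clique reaches out to exactly the private points of its
neighbours. Each vertex is then represented by the convex hull of its points.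
-/

open Filter Topology Cardinal

section ContactPoints

variable {ι V E : Type*} [Preorder ι]

/-- The points spanning the convex set of the vertex `u`, for arcs `γ a b` parametrized by the
vertices: the point of `u` itself on each arc that its class shares with an earlier class or with
itself, and the points of its neighbours on the arcs shared with the classes from its own onwards.
-/
def contactPoints (G : SimpleGraph V) (P : V → ι) (γ : ι → ι → V → E) (u : V) : Set E :=
  (fun c => γ c (P u) u) '' Set.Iic (P u) ∪
    (fun v => γ (P u) (P v) v) '' {v | G.Adj u v ∧ P u ≤ P v}

variable {G : SimpleGraph V} {P : V → ι} {γ : ι → ι → V → E} {u v : V}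

theorem mem_contactPoints_of_le {c : ι} (hc : c ≤ P u) : γ c (P u) u ∈ contactPoints G P γ u :=
  Or.inl ⟨c, hc, rfl⟩

theorem mem_contactPoints_of_adj (huv : G.Adj u v) (hP : P u ≤ P v) :
    γ (P u) (P v) v ∈ contactPoints G P γ u :=
  Or.inr ⟨v, ⟨huv, hP⟩, rfl⟩

end ContactPoints

section ContactSystem

variable {ι T V E : Type*} [AddCommGroup E] [Module ℝ E]

/-- A family of arcs `γ a b`, one for each unordered pair of classes, such that every point
`γ a b t` with `a < b` lies on a hyperplane having on one side all other points of `γ a b` and all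
other arcs of class `a`, and on the other side all other arcs of class `b`. The arc `γ a a` provides
common points for the sets of class `a`. -/
structure IsContactSystem [LT ι] (γ : ι → ι → T → E) : Prop where
  symm : ∀ a b, γ a b = γ b a
  exists_separating : ∀ a b, a < b → ∀ t, ∃ φ : Module.Dual ℝ E,
    (∀ s ≠ t, φ (γ a b t) < φ (γ a b s)) ∧
    (∀ c ≠ b, ∀ s, φ (γ a b t) < φ (γ a c s)) ∧
    (∀ c ≠ a, ∀ s, φ (γ b c s) < φ (γ a b t))

theorem IsContactSystem.comp_injective [LT ι] {γ : ι → ι → T → E} (hγ : IsContactSystem γ)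
    {f : V → T} (hf : Function.Injective f) : IsContactSystem fun a b v => γ a b (f v) where
  symm a b := by simp only [hγ.symm a b]
  exists_separating a b hab v := by
    obtain ⟨φ, harc, hleft, hright⟩ := hγ.exists_separating a b hab (f v)
    exact ⟨φ, fun w hw => harc _ (hf.ne hw), fun c hc w => hleft c hc _,
      fun c hc w => hright c hc _⟩

variable {G : SimpleGraph V} {P : V → ι} {γ : ι → ι → V → E} {u v : V}

theorem IsContactSystem.disjoint_convexHull_contactPoints [Preorder ι] (hγ : IsContactSystem γ)
    (hP : P u < P v) (huv : ¬ G.Adj u v) :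
    Disjoint (convexHull ℝ (contactPoints G P γ u)) (convexHull ℝ (contactPoints G P γ v)) := by
  obtain ⟨φ, harc, hleft, hright⟩ := hγ.exists_separating (P u) (P v) hP v
  have hu : ∀ x ∈ contactPoints G P γ u, φ (γ (P u) (P v) v) < φ x := by
    rintro _ (⟨c, hc, rfl⟩ | ⟨w, ⟨huw, -⟩, rfl⟩)
    · simpa only [hγ.symm c] using hleft c (hc.trans_lt hP).ne u
    · by_cases hw : P w = P v
      · have hwv : w ≠ v := fun h => huv (h ▸ huw)
        simpa only [hw] using harc w hwv
      · exact hleft (P w) hw w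
  have hv : ∀ x ∈ contactPoints G P γ v, φ x ≤ φ (γ (P u) (P v) v) := by
    rintro _ (⟨c, -, rfl⟩ | ⟨w, ⟨-, hw⟩, rfl⟩)
    · by_cases hc : c = P u
      · rw [hc]
      · simpa only [hγ.symm c] using (hright c hc v).le
    · exact (hright (P w) (hP.trans_le hw).ne' w).le
  rw [Set.disjoint_left]
  intro x hxu hxv
  have hgt : φ (γ (P u) (P v) v) < φ x := convexHull_min hu (convex_halfSpace_gt φ.isLinear _) hxu
  have hle : φ x ≤ φ (γ (P u) (P v) v) := convexHull_min hv (convex_halfSpace_le φ.isLinear _) hxv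
  exact hgt.not_ge hle

theorem IsContactSystem.adj_iff_convexHull_inter_nonempty [LinearOrder ι]
    (hγ : IsContactSystem γ) (hclique : ∀ u v, u ≠ v → P u = P v → G.Adj u v) (huv : u ≠ v) :
    G.Adj u v ↔
      (convexHull ℝ (contactPoints G P γ u) ∩ convexHull ℝ (contactPoints G P γ v)).Nonempty := by
  wlog hP : P u ≤ P v generalizing u v
  · rw [G.adj_comm, Set.inter_comm]
    exact this huv.symm (le_of_not_ge hP)
  refine ⟨fun hadj => ⟨γ (P u) (P v) v, subset_convexHull ℝ _ (mem_contactPoints_of_adj hadj hP),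
    subset_convexHull ℝ _ (mem_contactPoints_of_le hP)⟩, fun hmeet => ?_⟩
  by_contra hadj
  have hlt : P u < P v := hP.lt_of_ne fun h => hadj (hclique u v huv h)
  exact Set.not_disjoint_iff_nonempty_inter.2 hmeet
    (hγ.disjoint_convexHull_contactPoints hlt hadj)

theorem IsContactSystem.exists_convex_realization [LinearOrder ι] (hγ : IsContactSystem γ)
    (hclique : ∀ u v, u ≠ v → P u = P v → G.Adj u v) :
    ∃ K : V → Set E, (∀ u, Convex ℝ (K u) ∧ (K u).Nonempty) ∧
      ∀ u v, G.Adj u v ↔ (u ≠ v ∧ (K u ∩ K v).Nonempty) := by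
  refine ⟨fun u => convexHull ℝ (contactPoints G P γ u), fun u => ⟨convex_convexHull ℝ _,
    _, subset_convexHull ℝ _ (mem_contactPoints_of_le le_rfl)⟩, fun u v => ⟨fun hadj => ?_, ?_⟩⟩
  · exact ⟨hadj.ne, (hγ.adj_iff_convexHull_inter_nonempty hclique hadj.ne).1 hadj⟩
  · exact fun ⟨hne, hmeet⟩ => (hγ.adj_iff_convexHull_inter_nonempty hclique hne).2 hmeet

end ContactSystem

section Parabola

/-- The standard scalar product with `n`, as a functional on the plane. -/
def planeDot (n : ℝ × ℝ) : Module.Dual ℝ (ℝ × ℝ) :=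
  n.1 • LinearMap.fst ℝ ℝ ℝ + n.2 • LinearMap.snd ℝ ℝ ℝ

theorem planeDot_apply (n x : ℝ × ℝ) : planeDot n x = n.1 * x.1 + n.2 * x.2 := rfl

/-- The parabola with vertex `p` and axis direction `n`. -/
def parabola (p n : ℝ × ℝ) (s : ℝ) : ℝ × ℝ :=
  p + s • (-n.2, n.1) + s ^ 2 • n

/-- The normal of `parabola p n` at the parameter `t`. -/
def parabolaNormal (n : ℝ × ℝ) (t : ℝ) : ℝ × ℝ :=
  n - (2 * t) • (-n.2, n.1)

theorem planeDot_parabolaNormal_parabola_eq_add (p n : ℝ × ℝ) (s t : ℝ) :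
    planeDot (parabolaNormal n t) (parabola p n s) =
      planeDot (parabolaNormal n t) (parabola p n t) + (n.1 ^ 2 + n.2 ^ 2) * (s - t) ^ 2 := by
  simp only [planeDot_apply, parabolaNormal, parabola, Prod.fst_add, Prod.snd_add, Prod.smul_fst,
    Prod.smul_snd, Prod.fst_sub, Prod.snd_sub, smul_eq_mul]
  ring

theorem planeDot_parabolaNormal_parabola_lt {n : ℝ × ℝ} (hn : n ≠ 0) (p : ℝ × ℝ) {s t : ℝ}
    (hst : s ≠ t) : planeDot (parabolaNormal n t) (parabola p n t) <
      planeDot (parabolaNormal n t) (parabola p n s) := by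
  have hnorm : 0 < n.1 ^ 2 + n.2 ^ 2 := by
    by_contra! hle
    have h₁ : n.1 = 0 := by nlinarith [sq_nonneg n.1, sq_nonneg n.2]
    have h₂ : n.2 = 0 := by nlinarith [sq_nonneg n.1, sq_nonneg n.2]
    exact hn (Prod.ext h₁ h₂)
  rw [planeDot_parabolaNormal_parabola_eq_add p n s t]
  exact lt_add_of_pos_right _ (mul_pos hnorm (sq_pos_of_ne_zero (sub_ne_zero.2 hst)))

theorem tendsto_planeDot_parabolaNormal_parabola {X : Type*} {l : Filter X} {f g : X → ℝ}
    (hf : Tendsto f l (𝓝 0)) (hg : Tendsto g l (𝓝 0)) (m p n : ℝ × ℝ) :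
    Tendsto (fun x => planeDot (parabolaNormal m (f x)) (parabola p n (g x))) l
      (𝓝 (planeDot m p)) := by
  have hcont : Continuous fun q : ℝ × ℝ => planeDot (parabolaNormal m q.1) (parabola p n q.2) := by
    simp only [planeDot_apply, parabolaNormal, parabola, Prod.fst_add, Prod.snd_add, Prod.smul_fst,
      Prod.smul_snd, Prod.fst_sub, Prod.snd_sub]
    fun_prop
  have hzero : planeDot (parabolaNormal m 0) (parabola p n 0) = planeDot m p := by
    simp [parabolaNormal, parabola]
  have hlim := (hcont.tendsto (0, 0)).comp (hf.prodMk_nhds hg)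
  rwa [hzero] at hlim

end Parabola

section ContactConfiguration

variable {ι : Type*} [Preorder ι]

/-- Touching polygons in the plane: `p a b` is the point where polygons `a` and `b` touch, `p a a`
is a further point of polygon `a`, and the line through `p a b` with normal `n a b` strictly
separates the remaining points of the two polygons, the normal pointing to the smaller index. -/
structure IsContactConfiguration (p n : ι → ι → ℝ × ℝ) : Prop where
  point_symm : ∀ a b, p a b = p b a
  normal_symm : ∀ a b, n a b = n b a
  contact_lt_left : ∀ a b c, a < b → c ≠ b → planeDot (n a b) (p a b) < planeDot (n a b) (p a c)
  right_lt_contact : ∀ a b c, a < b → c ≠ a → planeDot (n a b) (p b c) < planeDot (n a b) (p a b)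

variable {p n : ι → ι → ℝ × ℝ}

theorem IsContactConfiguration.normal_ne_zero (h : IsContactConfiguration p n) {a b : ι}
    (hab : a < b) : n a b ≠ 0 := by
  intro hn
  simpa [hn, planeDot_apply] using h.contact_lt_left a b a hab hab.ne

theorem IsContactConfiguration.eventually_contact_lt_left [Finite ι]
    (h : IsContactConfiguration p n) :
    ∀ᶠ q : ℝ × ℝ in 𝓝 0 ×ˢ 𝓝 0, ∀ a b c, a < b → c ≠ b →
      planeDot (parabolaNormal (n a b) q.1) (parabola (p a b) (n a b) q.1) <
        planeDot (parabolaNormal (n a b) q.1) (parabola (p a c) (n a c) q.2) := by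
  simp only [eventually_all]
  intro a b c hab hc
  exact (tendsto_planeDot_parabolaNormal_parabola tendsto_fst tendsto_fst _ _ _).eventually_lt
    (tendsto_planeDot_parabolaNormal_parabola tendsto_fst tendsto_snd _ _ _)
    (h.contact_lt_left a b c hab hc)

theorem IsContactConfiguration.eventually_right_lt_contact [Finite ι]
    (h : IsContactConfiguration p n) :
    ∀ᶠ q : ℝ × ℝ in 𝓝 0 ×ˢ 𝓝 0, ∀ a b c, a < b → c ≠ a →
      planeDot (parabolaNormal (n a b) q.1) (parabola (p b c) (n b c) q.2) <
        planeDot (parabolaNormal (n a b) q.1) (parabola (p a b) (n a b) q.1) := by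
  simp only [eventually_all]
  intro a b c hab hc
  exact (tendsto_planeDot_parabolaNormal_parabola tendsto_fst tendsto_snd _ _ _).eventually_lt
    (tendsto_planeDot_parabolaNormal_parabola tendsto_fst tendsto_fst _ _ _)
    (h.right_lt_contact a b c hab hc)

theorem IsContactConfiguration.exists_isContactSystem [Finite ι]
    (h : IsContactConfiguration p n) :
    ∃ U ∈ 𝓝 (0 : ℝ), IsContactSystem fun a b (t : U) => parabola (p a b) (n a b) t := by
  obtain ⟨U, hU, hsep⟩ :=
    eventually_prod_self_iff'.1 (h.eventually_contact_lt_left.and h.eventually_right_lt_contact)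
  refine ⟨U, hU, fun a b => by rw [h.point_symm, h.normal_symm], fun a b hab t => ?_⟩
  refine ⟨planeDot (parabolaNormal (n a b) t), fun s hst => ?_, fun c hc s => ?_, fun c hc s => ?_⟩
  · exact planeDot_parabolaNormal_parabola_lt (h.normal_ne_zero hab) _ (Subtype.coe_ne_coe.2 hst)
  · exact (hsep t t.2 s s.2).1 a b c hab hc
  · exact (hsep t t.2 s s.2).2 a b c hab hc

end ContactConfiguration

section FourTriangles

/-- The contact points of triangle `0` with vertices `(5, 2)`, `(5, 5)`, `(2, 5)` and the thin
triangles `1`, `2`, `3` along the sides of the triangle with vertices `(0, 0)`, `(12, 0)`,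
`(0, 12)`; the diagonal entries are further points of the four triangles. -/
def trianglePoint : Fin 4 → Fin 4 → ℤ × ℤ :=
  ![![(4, 4), (5, 2), (5, 5), (2, 5)],
    ![(5, 2), (6, 0), (12, 0), (0, 0)],
    ![(5, 5), (12, 0), (6, 6), (0, 12)],
    ![(2, 5), (0, 0), (0, 12), (0, 6)]]

/-- Normals of lines through the points `trianglePoint a b` separating triangle `a` from
triangle `b`; the diagonal entries are irrelevant. -/
def triangleNormal : Fin 4 → Fin 4 → ℤ × ℤ :=
  ![![(0, 0), (0, 1), (-1, -1), (1, 0)],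
    ![(0, 1), (0, 0), (-1, -2), (1, -1)],
    ![(-1, -1), (-1, -2), (0, 0), (2, 1)],
    ![(1, 0), (1, -1), (2, 1), (0, 0)]]

theorem planeDot_intCast (m x : ℤ × ℤ) :
    planeDot (Prod.map (↑) (↑) m) (Prod.map (↑) (↑) x) = ((m.1 * x.1 + m.2 * x.2 : ℤ) : ℝ) := by
  simp only [planeDot_apply, Prod.map_fst, Prod.map_snd, Int.cast_add, Int.cast_mul]

theorem isContactConfiguration_triangle :
    IsContactConfiguration (fun a b => Prod.map (↑) (↑) (trianglePoint a b))
      (fun a b => Prod.map (↑) (↑) (triangleNormal a b)) where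
  point_symm a b := by rw [show trianglePoint a b = trianglePoint b a by decide +revert]
  normal_symm a b := by rw [show triangleNormal a b = triangleNormal b a by decide +revert]
  contact_lt_left a b c := by
    simp only [planeDot_intCast, Int.cast_lt]
    decide +revert
  right_lt_contact a b c := by
    simp only [planeDot_intCast, Int.cast_lt]
    decide +revert

end FourTriangles

theorem nonempty_embedding_of_mem_nhds {V : Type*} (hV : #V ≤ 𝔠) {x : ℝ} {U : Set ℝ}
    (hU : U ∈ 𝓝 x) : Nonempty (V ↪ U) := by
  rw [← lift_mk_le', cardinal_eq_of_mem_nhds ℝ hU, mk_real]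
  simpa using hV

theorem four_cliques_convex_realizable_general {V : Type*} (hV : #V ≤ 𝔠) (G : SimpleGraph V)
    (P : V → Fin 4) (hclique : ∀ i j, i ≠ j → P i = P j → G.Adj i j) :
    ∃ K : V → Set (ℝ × ℝ), (∀ i, Convex ℝ (K i) ∧ (K i).Nonempty) ∧
      ∀ i j, G.Adj i j ↔ (i ≠ j ∧ (K i ∩ K j).Nonempty) := by
  obtain ⟨U, hU, hsystem⟩ := isContactConfiguration_triangle.exists_isContactSystem
  obtain ⟨f⟩ := nonempty_embedding_of_mem_nhds hV hU
  exact (hsystem.comp_injective f.injective).exists_convex_realization hclique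

/-- (Pach–Tóth) Let `G` be a graph on an `n`-element vertex set partitioned into four
classes (given by `P : Fin n → Fin 4`), each of which induces a clique in `G`. Then `G`
is the intersection graph of a family of `n` (nonempty) convex sets in the plane. -/
theorem four_cliques_convex_realizable (n : ℕ) (G : SimpleGraph (Fin n))
    (P : Fin n → Fin 4)
    (hclique : ∀ i j : Fin n, i ≠ j → P i = P j → G.Adj i j) :
    ∃ K : Fin n → Set (ℝ × ℝ),
      (∀ i, Convex ℝ (K i) ∧ (K i).Nonempty) ∧
      ∀ i j : Fin n, G.Adj i j ↔ (i ≠ j ∧ (K i ∩ K j).Nonempty) := by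
  exact four_cliques_convex_realizable_general (mk_le_aleph0.trans aleph0_le_continuum) G P
    hclique
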